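/- Let x be a solution of the system on [t0, ∞) with initial value x0, let σ > 0, let k ≥ 1 be an integer, let (ℓ_ν)_{ν≥k} be a nonincreasing sequence in (0, 1/2] with lim_{ν→∞} ℓ_{ν−1} e^{Kσ(ν+1)} = 0, and let (ξ_ν)_{ν≥k} be a sequence in ℝⁿ with |ξ_ν − x0| ≤ (∏_{i=k}^{ν−1} ℓ_i) |ξ_k − x0| for all ν > k. For each ν ≥ k let x̂_ν be a solution of the system on [t0, ∞) with initial value ξ_ν, and define the hybrid estimate x̂ : [t0 + kσ, ∞) → ℝⁿ by x̂(t) := x̂_ν(t) for t ∈ [t0 + νσ, t0 + (ν+1)σ), ν = k, k+1, …. Then lim_{t→∞} |x̂(t) − x(t)| = 0. -/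

import Mathlib

open MeasureTheory Matrix Set Filter Topology

noncomputable section

/-- `x` is a solution of `ẋ = A(t)x + g(t,x)` on `[t0, ∞)` with initial value `ξ`
(integral form, componentwise). -/
def IsSolutionFrom (n : ℕ) (t0 : ℝ) (A : ℝ → Matrix (Fin n) (Fin n) ℝ)
    (g : ℝ → (Fin n → ℝ) → (Fin n → ℝ)) (ξ : Fin n → ℝ) (x : ℝ → (Fin n → ℝ)) : Prop :=
  ContinuousOn x (Set.Ici t0) ∧
    ∀ t ∈ Set.Ici t0, ∀ i : Fin n,
      x t i = ξ i + ∫ s in t0..t, ((A s).mulVec (x s) i + g s (x s) i)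

/-- Regularity of the data on `[t0, ∞)`: `A` measurable with operator norm bound `M`,
`g` measurable in `t`, globally `C0`-Lipschitz in `x`, `g(·,0)` locally bounded. -/
def RegularData (n : ℕ) (t0 M C0 : ℝ) (A : ℝ → Matrix (Fin n) (Fin n) ℝ)
    (g : ℝ → (Fin n → ℝ) → (Fin n → ℝ)) : Prop :=
  (∀ i j, Measurable fun t => A t i j) ∧
  (∀ t ∈ Set.Ici t0, ∀ v : Fin n → ℝ, ‖(A t).mulVec v‖ ≤ M * ‖v‖) ∧
  (∀ v : Fin n → ℝ, ∀ i, Measurable fun t => g t v i) ∧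
  (∀ t ∈ Set.Ici t0, ∀ z1 z2 : Fin n → ℝ, ‖g t z1 - g t z2‖ ≤ C0 * ‖z1 - z2‖) ∧
  (∀ T : ℝ, ∃ B : ℝ, ∀ t ∈ Set.Icc t0 T, ‖g t 0‖ ≤ B)

/-- Integral form of Gronwall for a function continuous on `[t0, ∞)`. -/
theorem gron_aux (t0 K a : ℝ) (hK : 0 ≤ K) (ha : 0 ≤ a) (d : ℝ → ℝ) (hd : Continuous d)
    (hd0 : ∀ t, 0 ≤ d t)
    (h : ∀ t, t0 ≤ t → d t ≤ a + K * ∫ s in t0..t, d s) :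
    ∀ t, t0 ≤ t → d t ≤ a * Real.exp (K * (t - t0)) := by
  intro t ht
  have hder : ∀ u, HasDerivAt (fun u => a + K * ∫ s in t0..u, d s) (K * d u) u := fun u =>
    ((intervalIntegral.integral_hasDerivAt_right (hd.intervalIntegrable _ _)
      hd.aestronglyMeasurable.stronglyMeasurableAtFilter hd.continuousAt).const_mul K).const_add a
  have := norm_le_gronwallBound_of_norm_deriv_right_le (f := fun u => a + K * ∫ s in t0..u, d s)
    (f' := fun u => K * d u) (δ := a) (K := K) (ε := 0) (a := t0) (b := t)
    (fun u _ => (hder u).continuousAt.continuousWithinAt)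
    (fun u _ => (hder u).hasDerivWithinAt)
    (by simp [abs_of_nonneg ha])
    (by
      intro u hu
      have h1 := h u hu.1
      rw [Real.norm_of_nonneg (mul_nonneg hK (hd0 u)),
        Real.norm_of_nonneg ((hd0 u).trans h1), add_zero]
      exact mul_le_mul_of_nonneg_left h1 hK) t ⟨ht, le_rfl⟩
  rw [gronwallBound_ε0] at this
  exact (h t ht).trans ((le_abs_self _).trans this)

theorem integrand_aux (n : ℕ) (t0 : ℝ)
    (M C0 : ℝ) (hM : 0 < M) (hC0 : 0 < C0)
    (A : ℝ → Matrix (Fin n) (Fin n) ℝ) (g : ℝ → (Fin n → ℝ) → (Fin n → ℝ))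
    (hreg : RegularData n t0 M C0 A g) (x : ℝ → (Fin n → ℝ))
    (hx : ContinuousOn x (Set.Ici t0)) (i : Fin n) (t : ℝ) (ht : t0 ≤ t) :
    IntervalIntegrable (fun s => (A s).mulVec (x s) i + g s (x s) i) volume t0 t := by
  obtain ⟨hA, hAM, hg, hgL, hg0⟩ := hreg
  set y : ℝ → (Fin n → ℝ) := fun s => x (max s t0) with hy
  have hyc : Continuous y :=
    hx.comp_continuous (by fun_prop) (fun s => Set.mem_Ici.2 (le_max_right _ _))
  have hyx : ∀ s, t0 ≤ s → y s = x s := fun s hs => by simp [hy, max_eq_left hs]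
  -- Caratheodory measurability
  have hG : Measurable (Function.uncurry fun (v : Fin n → ℝ) (s : ℝ) =>
      if t0 ≤ s then g s v i else 0) := by
    apply measurable_uncurry_of_continuous_of_measurable
    · intro s
      by_cases hs : t0 ≤ s
      · simp only [hs, if_true]
        have : LipschitzWith (Real.toNNReal C0) (g s) :=
          LipschitzWith.of_dist_le_mul fun z1 z2 => by
            rw [dist_eq_norm, dist_eq_norm, Real.coe_toNNReal _ hC0.le]
            exact hgL s hs z1 z2
        exact (continuous_apply i).comp this.continuous
      · simp only [hs, if_false]
        exact continuous_const
    · intro v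
      exact Measurable.ite measurableSet_Ici (hg v i) measurable_const
  have hF : Measurable fun s => (A s).mulVec (y s) i + (if t0 ≤ s then g s (y s) i else 0) := by
    refine Measurable.add ?_ (hG.comp (hyc.measurable.prodMk measurable_id))
    simp only [Matrix.mulVec, dotProduct]
    refine Finset.measurable_sum _ fun j _ => (hA i j).mul ?_
    exact (measurable_pi_apply j).comp hyc.measurable
  obtain ⟨B, hB⟩ := hg0 t
  have hdom : IntervalIntegrable (fun s => (M + C0) * ‖y s‖ + B) volume t0 t :=
    Continuous.intervalIntegrable (by fun_prop) _ _
  have hint : IntervalIntegrable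
      (fun s => (A s).mulVec (y s) i + (if t0 ≤ s then g s (y s) i else 0)) volume t0 t := by
    refine hdom.mono_fun' hF.aestronglyMeasurable ?_
    refine (ae_restrict_iff' measurableSet_uIoc).2 (ae_of_all _ fun s hs => ?_)
    rw [uIoc_of_le ht] at hs
    have hs0 : t0 ≤ s := hs.1.le
    simp only [hs0, if_true]
    have h1 := (norm_le_pi_norm ((A s).mulVec (y s)) i).trans (hAM s hs0 (y s))
    have h2 := norm_le_pi_norm (g s (y s)) i
    have h3 := hgL s hs0 (y s) 0
    have h4 := hB s ⟨hs0, hs.2⟩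
    have h5 : ‖g s (y s)‖ ≤ ‖g s (y s) - g s 0‖ + ‖g s 0‖ := by
      simpa using norm_add_le (g s (y s) - g s 0) (g s 0)
    have h6 := norm_add_le ((A s).mulVec (y s) i) (g s (y s) i)
    rw [sub_zero] at h3
    linarith
  refine hint.congr ?_
  intro s hs
  rw [uIoc_of_le ht] at hs
  simp [hs.1.le, hyx s hs.1.le]

theorem sol_dist (n : ℕ) (t0 : ℝ)
    (M C0 : ℝ) (hM : 0 < M) (hC0 : 0 < C0)
    (A : ℝ → Matrix (Fin n) (Fin n) ℝ) (g : ℝ → (Fin n → ℝ) → (Fin n → ℝ))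
    (hreg : RegularData n t0 M C0 A g) (x y : ℝ → (Fin n → ℝ)) (x0 y0 : Fin n → ℝ)
    (hx : IsSolutionFrom n t0 A g x0 x) (hy : IsSolutionFrom n t0 A g y0 y)
    (t : ℝ) (ht : t0 ≤ t) :
    ‖y t - x t‖ ≤ ‖y0 - x0‖ * Real.exp ((M + C0) * (t - t0)) := by
  set d : ℝ → ℝ := fun s => ‖y (max s t0) - x (max s t0)‖ with hd
  have hdc : Continuous d :=
    ((hy.1.comp_continuous (by fun_prop) (fun s => Set.mem_Ici.2 (le_max_right _ _))).sub
      (hx.1.comp_continuous (by fun_prop) (fun s => Set.mem_Ici.2 (le_max_right _ _)))).norm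
  have hdx : ∀ s, t0 ≤ s → d s = ‖y s - x s‖ := fun s hs => by simp [hd, max_eq_left hs]
  have hd0 : ∀ s, 0 ≤ d s := fun s => norm_nonneg _
  have := gron_aux t0 (M + C0) ‖y0 - x0‖ (by linarith) (norm_nonneg _) d hdc hd0 ?_ t ht
  · rwa [hdx t ht] at this
  intro u hu
  have hI0 : 0 ≤ ∫ s in t0..u, d s := intervalIntegral.integral_nonneg hu fun s _ => hd0 s
  rw [hdx u hu, pi_norm_le_iff_of_nonneg
    (add_nonneg (norm_nonneg _) (mul_nonneg (by linarith) hI0))]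
  intro i
  have e1 := hx.2 u hu i
  have e2 := hy.2 u hu i
  have i1 := integrand_aux n t0 M C0 hM hC0 A g hreg x hx.1 i u hu
  have i2 := integrand_aux n t0 M C0 hM hC0 A g hreg y hy.1 i u hu
  have key : (y u - x u) i = (y0 - x0) i + ∫ s in t0..u,
      (((A s).mulVec (y s) i + g s (y s) i) - ((A s).mulVec (x s) i + g s (x s) i)) := by
    rw [intervalIntegral.integral_sub i2 i1, Pi.sub_apply, Pi.sub_apply, e1, e2]
    ring
  rw [key]
  refine (norm_add_le _ _).trans (add_le_add (norm_le_pi_norm (y0 - x0) i) ?_)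
  rw [← intervalIntegral.integral_const_mul]
  refine intervalIntegral.norm_integral_le_of_norm_le hu (ae_of_all _ fun s hs => ?_)
    ((hdc.const_mul _).intervalIntegrable _ _)
  have hs0 : t0 ≤ s := hs.1.le
  obtain ⟨hA, hAM, hg, hgL, hg0⟩ := hreg
  rw [hdx s hs0]
  have h1 := (norm_le_pi_norm ((A s).mulVec (y s - x s)) i).trans (hAM s hs0 _)
  have h2 := (norm_le_pi_norm (g s (y s) - g s (x s)) i).trans (hgL s hs0 _ _)
  rw [Matrix.mulVec_sub] at h1
  have h3 := norm_add_le (((A s).mulVec (y s) - (A s).mulVec (x s)) i) ((g s (y s) - g s (x s)) i)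
  have h4 : ((A s).mulVec (y s) i + g s (y s) i) - ((A s).mulVec (x s) i + g s (x s) i)
      = ((A s).mulVec (y s) - (A s).mulVec (x s)) i + (g s (y s) - g s (x s)) i := by
    simp only [Pi.sub_apply]; ring
  rw [h4]
  linarith

theorem stmt4 (n : ℕ) (hn : 1 ≤ n) (t0 : ℝ)
    (M C0 : ℝ) (hM : 0 < M) (hC0 : 0 < C0) (K : ℝ) (hK : K = M + C0)
    (A : ℝ → Matrix (Fin n) (Fin n) ℝ) (g : ℝ → (Fin n → ℝ) → (Fin n → ℝ))
    (hreg : RegularData n t0 M C0 A g)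
    (x : ℝ → (Fin n → ℝ)) (x0 : Fin n → ℝ) (hx : IsSolutionFrom n t0 A g x0 x)
    (σ : ℝ) (hσ : 0 < σ)
    (k : ℕ) (hk : 1 ≤ k)
    (ℓ : ℕ → ℝ)
    (hℓ_mem : ∀ ν : ℕ, k ≤ ν → ℓ ν ∈ Set.Ioc (0:ℝ) (1/2))
    (hℓ_dec : ∀ ν : ℕ, k ≤ ν → ℓ (ν + 1) ≤ ℓ ν)
    (hℓ_lim : Filter.Tendsto (fun ν : ℕ => ℓ (ν - 1) * Real.exp (K * σ * (ν + 1)))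
      Filter.atTop (nhds 0))
    (ξ : ℕ → (Fin n → ℝ))
    (hξ : ∀ ν : ℕ, k < ν →
      ‖ξ ν - x0‖ ≤ (∏ i ∈ Finset.Ico k ν, ℓ i) * ‖ξ k - x0‖)
    (xh : ℕ → ℝ → (Fin n → ℝ))
    (hxh : ∀ ν : ℕ, k ≤ ν → IsSolutionFrom n t0 A g (ξ ν) (xh ν))
    (X : ℝ → (Fin n → ℝ))
    (hX : ∀ ν : ℕ, k ≤ ν → ∀ t ∈ Set.Ico (t0 + ν * σ) (t0 + (ν + 1) * σ),
      X t = xh ν t) :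
    Filter.Tendsto (fun t => ‖X t - x t‖) Filter.atTop (nhds 0) := by
  have hKpos : 0 < K := by linarith
  have hfl : Tendsto (fun t : ℝ => ⌊(t - t0) / σ⌋₊) atTop atTop :=
    tendsto_nat_floor_atTop.comp
      ((tendsto_atTop_add_const_right _ (-t0) tendsto_id).atTop_div_const hσ)
  have hlim := (hℓ_lim.comp hfl).mul_const ‖ξ k - x0‖
  rw [zero_mul] at hlim
  refine squeeze_zero' (Eventually.of_forall fun t => norm_nonneg _) ?_ hlim
  filter_upwards [hfl.eventually_ge_atTop (k + 1), eventually_ge_atTop t0] with t hν ht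
  simp only [Function.comp]
  set ν := ⌊(t - t0) / σ⌋₊ with hνdef
  have hq : 0 ≤ (t - t0) / σ := div_nonneg (by linarith) hσ.le
  have h1 : (ν : ℝ) * σ ≤ t - t0 := (le_div_iff₀ hσ).1 (Nat.floor_le hq)
  have h2 : t - t0 < ((ν : ℝ) + 1) * σ := (div_lt_iff₀ hσ).1 (Nat.lt_floor_add_one _)
  rw [hX ν (by omega) t ⟨by linarith, by linarith⟩]
  have h3 := sol_dist n t0 M C0 hM hC0 A g hreg x (xh ν) x0 (ξ ν) hx (hxh ν (by omega)) t ht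
  rw [← hK] at h3
  have hprod : ∏ i ∈ Finset.Ico k ν, ℓ i ≤ ℓ (ν - 1) := by
    obtain ⟨m, hm⟩ : ∃ m, ν = m + 1 := ⟨ν - 1, by omega⟩
    rw [hm, Finset.prod_Ico_succ_top (by omega), Nat.add_sub_cancel]
    refine mul_le_of_le_one_left (hℓ_mem m (by omega)).1.le ?_
    refine Finset.prod_le_one (fun i hi => (hℓ_mem i (Finset.mem_Ico.1 hi).1).1.le) fun i hi => ?_
    have := (hℓ_mem i (Finset.mem_Ico.1 hi).1).2
    linarith
  have hl : 0 ≤ ℓ (ν - 1) := (hℓ_mem (ν - 1) (by omega)).1.le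
  have h4 : ‖ξ ν - x0‖ ≤ ℓ (ν - 1) * ‖ξ k - x0‖ :=
    (hξ ν (by omega)).trans (mul_le_mul_of_nonneg_right hprod (norm_nonneg _))
  have h5 : Real.exp (K * (t - t0)) ≤ Real.exp (K * σ * (ν + 1)) := by
    apply Real.exp_le_exp.2
    nlinarith
  calc _ ≤ _ := h3
    _ ≤ (ℓ (ν - 1) * ‖ξ k - x0‖) * Real.exp (K * σ * (ν + 1)) :=
      mul_le_mul h4 h5 (Real.exp_pos _).le (mul_nonneg hl (norm_nonneg _))
    _ = _ := by ring
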